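/- Let d ≥ 3 and let X₁,…,X_N and Y₁,…,Y_N be 2N independent random points uniformly distributed in [0,1]^d, with L_N = L_MBM(X₁,…,X_N; Y₁,…,Y_N). Then liminf_{N→∞} E(L_N)/N^{1−1/d} > 0; that is, the limit constant β_MBM(d) of E(L_N)/N^{1−1/d} is strictly positive. -/

import Mathlib

open MeasureTheory ProbabilityTheory Filter

noncomputable section

/-- The unit cube `[0,1]^d` in Euclidean space `ℝ^d`. -/
def unitCube (d : ℕ) : Set (EuclideanSpace ℝ (Fin d)) :=
  {x | ∀ i, x i ∈ Set.Icc (0 : ℝ) 1}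

/-- The uniform probability measure on the unit cube `[0,1]^d`
(the cube has Lebesgue measure one, so the restriction of Lebesgue measure
to the cube is the uniform probability measure on it). -/
def unifCube (d : ℕ) : Measure (EuclideanSpace ℝ (Fin d)) :=
  volume.restrict (unitCube d)

/-- `LMBMon X Y A B` is the minimum total Euclidean length of a partial bipartite
matching pairing `min A.card B.card` of the points `X j, j ∈ A` with as many of the
points `Y j, j ∈ B`, each pair consisting of one `X`-point and one `Y`-point. -/
def LMBMon {d N₁ N₂ : ℕ} (X : Fin N₁ → EuclideanSpace ℝ (Fin d))
    (Y : Fin N₂ → EuclideanSpace ℝ (Fin d)) (A : Finset (Fin N₁)) (B : Finset (Fin N₂)) : ℝ :=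
  sInf { s | ∃ (σ : Fin (min A.card B.card) ↪ Fin N₁) (τ : Fin (min A.card B.card) ↪ Fin N₂),
    (∀ i, σ i ∈ A) ∧ (∀ i, τ i ∈ B) ∧ s = ∑ i, dist (X (σ i)) (Y (τ i)) }

/-- `LMBM X Y` : the minimum total Euclidean length of a bipartite matching between the
points of `X` and the points of `Y`; if the two families have different cardinalities
`N₁ ≠ N₂`, it is the minimum length of a partial matching pairing `min N₁ N₂` points of
each family, leaving `|N₁ - N₂|` points unmatched. -/
def LMBM {d N₁ N₂ : ℕ} (X : Fin N₁ → EuclideanSpace ℝ (Fin d))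
    (Y : Fin N₂ → EuclideanSpace ℝ (Fin d)) : ℝ :=
  LMBMon X Y Finset.univ Finset.univ

/-- `MP d lam`: the expected length of a minimum bipartite matching in the Poissonized
model on `[0,1]^d` with intensity `lam`: the numbers `n₁, n₂` of points of the two
families are independent Poisson(lam) variables and the points are i.i.d. uniform
on the cube. -/
def MP (d : ℕ) (lam : ℝ) : ℝ :=
  ∑' n₁ : ℕ, ∑' n₂ : ℕ,
    (Real.exp (-lam) * lam ^ n₁ / n₁.factorial) *
      ((Real.exp (-lam) * lam ^ n₂ / n₂.factorial) *
        ∫ p : (Fin n₁ → EuclideanSpace ℝ (Fin d)) × (Fin n₂ → EuclideanSpace ℝ (Fin d)),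
          LMBM p.1 p.2 ∂ ((Measure.pi fun _ => unifCube d).prod (Measure.pi fun _ => unifCube d)))

end

/-!
For the lower bound, choose `r` of order `N ^ (-1 / d)` so small that a ball of radius `r` has mass
at most `1 / (2 * N)`. Then at most half of the points `X i` are expected to have some `Y j` within
distance `r`, and each of the others costs at least `r` in every matching.

An upper bound of the same order is needed too, because the real `liminf` of a function tending to
infinity has the junk value `0`. Charge a pair of points the side lengths of all the dyadic scales,
down to the scale `N ^ (-1 / d)`, at which a different cube contains each of them. A matching of
least total charge leaves unmatched within each cube only points of the family that is in the
majority there, since otherwise exchanging two partners would lower the charge. Hence the total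
charge at scale `2⁻ᵏ` is governed by the discrepancies of the cubes, which by pairwise independence
add up to an expected `O(√(N * 2 ^ (k * d)))`. Multiplied by `2⁻ᵏ` and summed over `k`, this is
dominated by the finest scale when `d ≥ 3`, which gives `O(N ^ (1 - 1 / d))`.
-/

section Matching

variable {d N : ℕ}

lemma LMBM_eq_iInf_perm (x y : Fin N → EuclideanSpace ℝ (Fin d)) :
    LMBM x y = ⨅ π : Equiv.Perm (Fin N), ∑ i, dist (x i) (y (π i)) := by
  unfold LMBM LMBMon iInf
  congr 1
  -- The type `Fin (min _ _)` indexing the pairs is only propositionally `Fin N`.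
  obtain ⟨n, hn⟩ : ∃ n, n = min (Finset.univ : Finset (Fin N)).card
      (Finset.univ : Finset (Fin N)).card := ⟨_, rfl⟩
  rw [← hn]
  obtain rfl : n = N := by simpa using hn
  ext s
  constructor
  · rintro ⟨σ, τ, -, -, rfl⟩
    let σ' : Equiv.Perm (Fin n) := .ofBijective σ (Finite.injective_iff_bijective.1 σ.injective)
    let τ' : Equiv.Perm (Fin n) := .ofBijective τ (Finite.injective_iff_bijective.1 τ.injective)
    exact ⟨σ'.symm.trans τ', (Equiv.sum_comp σ' _).symm.trans (by simp [σ', τ'])⟩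
  · rintro ⟨π, rfl⟩
    exact ⟨.refl _, π.toEmbedding, by simp, by simp, by simp⟩

lemma LMBM_le_sum_dist_perm (x y : Fin N → EuclideanSpace ℝ (Fin d)) (π : Equiv.Perm (Fin N)) :
    LMBM x y ≤ ∑ i, dist (x i) (y (π i)) :=
  (LMBM_eq_iInf_perm x y).trans_le (ciInf_le (Set.finite_range _).bddBelow π)

lemma le_LMBM {x y : Fin N → EuclideanSpace ℝ (Fin d)} {a : ℝ}
    (h : ∀ π : Equiv.Perm (Fin N), a ≤ ∑ i, dist (x i) (y (π i))) : a ≤ LMBM x y :=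
  (le_ciInf h).trans_eq (LMBM_eq_iInf_perm x y).symm

lemma LMBM_nonneg (x y : Fin N → EuclideanSpace ℝ (Fin d)) : 0 ≤ LMBM x y :=
  le_LMBM fun _ => Finset.sum_nonneg fun _ _ => dist_nonneg

lemma aemeasurable_LMBM {Ω : Type*} [MeasurableSpace Ω] {μ : Measure Ω}
    {X Y : Fin N → Ω → EuclideanSpace ℝ (Fin d)} (hX : ∀ i, AEMeasurable (X i) μ)
    (hY : ∀ i, AEMeasurable (Y i) μ) :
    AEMeasurable (fun ω => LMBM (fun i => X i ω) (fun i => Y i ω)) μ := by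
  simp_rw [LMBM_eq_iInf_perm]
  exact AEMeasurable.iInf fun π => Finset.aemeasurable_fun_sum _ fun i _ => (hX i).dist (hY (π i))

end Matching

section Hierarchy

variable {α E ι : Type*} [Fintype α]

/-- The discrepancy of the families `x` and `y` on `A`: the absolute difference between the numbers
of members of `x` and of `y` lying in `A`. -/
noncomputable def discrepancy (A : Set E) (x y : α → E) : ℝ :=
  |∑ i, (A.indicator (1 : E → ℝ) (x i) - A.indicator (1 : E → ℝ) (y i))|

lemma discrepancy_comp_perm (A : Set E) (x y : α → E) (π : Equiv.Perm α) :
    discrepancy A x (y ∘ π) = discrepancy A x y := by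
  simp only [discrepancy, Finset.sum_sub_distrib, Function.comp_apply,
    Equiv.sum_comp π fun i => A.indicator (1 : E → ℝ) (y i)]

variable [DecidableEq ι]

lemma sum_ite_ne_le_sum_discrepancy {c : E → ι} {x y : α → E} {S : Finset ι}
    (hS : ∀ i, c (x i) ∈ S)
    (hxy : ∀ q, (∀ i, c (x i) = q → c (y i) = q) ∨ (∀ i, c (y i) = q → c (x i) = q)) :
    ∑ i, (if c (x i) = c (y i) then 0 else 1 : ℝ) ≤ ∑ q ∈ S, discrepancy (c ⁻¹' {q}) x y := by
  classical
  have hsplit (i : α) : (if c (x i) = c (y i) then 0 else 1 : ℝ) =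
      ∑ q ∈ S, if c (x i) = q then (if c (y i) = q then 0 else 1) else 0 := by
    simp_rw [Finset.sum_ite_eq, if_pos (hS i), eq_comm]
  simp_rw [hsplit]
  rw [Finset.sum_comm]
  refine Finset.sum_le_sum fun q _ => ?_
  obtain h | h := hxy q
  · refine (Finset.sum_eq_zero fun i _ => ?_).trans_le (abs_nonneg _)
    grind
  · refine le_trans (Finset.sum_le_sum fun i _ => ?_) (le_abs_self _)
    have := h i
    simp only [Set.indicator_apply, Set.mem_preimage, Set.mem_singleton_iff, Pi.one_apply]
    grind

/-- The cost of separating `x` from `y` in a hierarchy of partitions, given by the colourings `c k`: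
the total weight of the levels `k < K` at which `x` and `y` lie in different parts. For nested
partitions this is an ultrametric-like substitute for the distance. -/
def separationCost (c : ℕ → E → ι) (w : ℕ → ℝ) (K : ℕ) (x y : E) : ℝ :=
  ∑ k ∈ Finset.range K, if c k x = c k y then 0 else w k

variable {c : ℕ → E → ι} {w : ℕ → ℝ} {K : ℕ}

lemma separationCost_exchange_lt (hc : Antitone fun k => Setoid.ker (c k)) (hw : ∀ k, 0 < w k)
    {k : ℕ} (hk : k < K) {x x' y y' : E} (hxy' : c k x = c k y') (hxy : c k x ≠ c k y)
    (hx'y' : c k x' ≠ c k y') :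
    separationCost c w K x y' + separationCost c w K x' y <
      separationCost c w K x y + separationCost c w K x' y' := by
  have hmono {l m : ℕ} (hlm : l ≤ m) {u v : E} (h : c m u = c m v) : c l u = c l v := hc hlm h
  simp only [separationCost, ← Finset.sum_add_distrib]
  refine Finset.sum_lt_sum (fun l _ => ?_) ⟨k, Finset.mem_range.2 hk, ?_⟩
  · have := hw l
    obtain hlk | hkl := le_total l k
    · have := hmono hlk hxy'
      grind
    · have h₁ : c l x ≠ c l y := fun h => hxy (hmono hkl h)
      have h₂ : c l x' ≠ c l y' := fun h => hx'y' (hmono hkl h)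
      grind
  · have := hw k
    grind

lemma sum_apply_mul_swap [DecidableEq α] (f : α → α → ℝ) (π : Equiv.Perm α) {a b : α}
    (hab : a ≠ b) :
    ∑ i, f i ((π * Equiv.swap a b) i) - ∑ i, f i (π i) =
      f a (π b) + f b (π a) - (f a (π a) + f b (π b)) := by
  rw [← Finset.sum_sub_distrib, Fintype.sum_eq_add a b hab]
  · simp only [Equiv.Perm.mul_apply, Equiv.swap_apply_left, Equiv.swap_apply_right]
    ring
  · rintro i ⟨hia, hib⟩
    rw [Equiv.Perm.mul_apply, Equiv.swap_apply_of_ne_of_ne hia hib, sub_self]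

lemma fiber_saturated_of_minimal (hc : Antitone fun k => Setoid.ker (c k)) (hw : ∀ k, 0 < w k)
    {x y : α → E} {π : Equiv.Perm α}
    (hπ : ∀ ρ : Equiv.Perm α, ∑ i, separationCost c w K (x i) (y (π i)) ≤
      ∑ i, separationCost c w K (x i) (y (ρ i))) {k : ℕ} (hk : k < K) (q : ι) :
    (∀ i, c k (x i) = q → c k (y (π i)) = q) ∨ (∀ i, c k (y (π i)) = q → c k (x i) = q) := by
  classical
  -- If both inclusions fail, exchanging the partners of the two witnesses lowers the cost.
  by_contra! hcon
  obtain ⟨⟨a, hxa, hya⟩, ⟨b, hyb, hxb⟩⟩ := hcon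
  have hab : a ≠ b := by rintro rfl; exact hya hyb
  have hlt := separationCost_exchange_lt hc hw hk (hxa.trans hyb.symm) (hxa.trans_ne hya.symm)
    (hxb.trans_eq hyb.symm)
  have hswap := sum_apply_mul_swap (fun i j => separationCost c w K (x i) (y j)) π hab
  linarith [hπ (π * Equiv.swap a b)]

lemma exists_perm_sum_separationCost_le (hc : Antitone fun k => Setoid.ker (c k))
    (hw : ∀ k, 0 < w k) {x : α → E} (y : α → E) {S : ℕ → Finset ι}
    (hS : ∀ k i, c k (x i) ∈ S k) :
    ∃ π : Equiv.Perm α, ∑ i, separationCost c w K (x i) (y (π i)) ≤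
      ∑ k ∈ Finset.range K, w k * ∑ q ∈ S k, discrepancy (c k ⁻¹' {q}) x y := by
  classical
  obtain ⟨π, hπ⟩ := Finite.exists_min fun π : Equiv.Perm α =>
    ∑ i, separationCost c w K (x i) (y (π i))
  refine ⟨π, ?_⟩
  simp only [separationCost]
  rw [Finset.sum_comm]
  refine Finset.sum_le_sum fun k hk => ?_
  calc ∑ i, (if c k (x i) = c k (y (π i)) then 0 else w k)
      = w k * ∑ i, (if c k (x i) = c k ((y ∘ π) i) then 0 else 1) := by
        simp [Finset.mul_sum]
    _ ≤ w k * ∑ q ∈ S k, discrepancy (c k ⁻¹' {q}) x (y ∘ π) := by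
        gcongr
        · exact (hw k).le
        · exact sum_ite_ne_le_sum_discrepancy (hS k)
            (fiber_saturated_of_minimal hc hw hπ (Finset.mem_range.1 hk))
    _ = w k * ∑ q ∈ S k, discrepancy (c k ⁻¹' {q}) x y := by
        simp only [discrepancy_comp_perm]

end Hierarchy

section Dyadic

variable {d : ℕ}

/-- The index of the dyadic cube of side `2⁻ᵏ` containing `x`. Cubes are closed below and open
above, so that points on the upper faces of the unit cube get an index with a coordinate `2ᵏ`. -/
noncomputable def dyadicIndex (k : ℕ) (x : EuclideanSpace ℝ (Fin d)) : Fin d → ℤ :=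
  fun i => ⌊2 ^ k * x i⌋

/-- The finite set of indices that `dyadicIndex k` takes on the unit cube. -/
noncomputable def dyadicIndices (d k : ℕ) : Finset (Fin d → ℤ) :=
  Fintype.piFinset fun _ => Finset.Icc 0 (2 ^ k)

lemma card_dyadicIndices (d k : ℕ) : (dyadicIndices d k).card = (2 ^ k + 1) ^ d := by
  have h : ((2 : ℤ) ^ k + 1).toNat = 2 ^ k + 1 := by
    exact_mod_cast Int.toNat_natCast (2 ^ k + 1)
  simp [dyadicIndices, h]

lemma dyadicIndex_mem_dyadicIndices (k : ℕ) {x : EuclideanSpace ℝ (Fin d)} (hx : x ∈ unitCube d) :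
    dyadicIndex k x ∈ dyadicIndices d k := by
  refine Fintype.mem_piFinset.2 fun i => Finset.mem_Icc.2 ⟨?_, ?_⟩
  · exact Int.floor_nonneg.2 (mul_nonneg (by positivity) (hx i).1)
  · refine Int.floor_le_iff.2 ?_
    push_cast
    linarith [mul_le_of_le_one_right (by positivity : (0 : ℝ) ≤ 2 ^ k) (hx i).2]

lemma measurable_dyadicIndex (k : ℕ) : Measurable (dyadicIndex (d := d) k) :=
  measurable_pi_lambda _ fun i => Int.measurable_floor.comp (by fun_prop)

lemma antitone_ker_dyadicIndex :
    Antitone fun k => Setoid.ker (dyadicIndex (d := d) k) := by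
  refine antitone_nat_of_succ_le fun k x y (h : dyadicIndex (k + 1) x = dyadicIndex (k + 1) y) => ?_
  have hhalf (z : EuclideanSpace ℝ (Fin d)) (i : Fin d) :
      dyadicIndex k z i = dyadicIndex (k + 1) z i / (2 : ℕ) := by
    rw [dyadicIndex, dyadicIndex, ← Int.floor_div_natCast]
    congr 1
    push_cast
    ring
  change dyadicIndex k x = dyadicIndex k y
  ext i
  rw [hhalf, hhalf, h]

lemma dist_le_mul_of_forall_abs_sub_le {x y : EuclideanSpace ℝ (Fin d)} {l : ℝ}
    (h : ∀ i, |x i - y i| ≤ l) : dist x y ≤ d * l := by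
  rw [dist_eq_norm, ← (EuclideanSpace.basisFun (Fin d) ℝ).sum_repr (x - y)]
  refine (norm_sum_le_of_le _ fun i _ => ?_).trans (by simp : ∑ _ : Fin d, l ≤ d * l)
  simpa [norm_smul] using h i

lemma dist_le_of_dyadicIndex_eq {k : ℕ} {x y : EuclideanSpace ℝ (Fin d)}
    (h : dyadicIndex k x = dyadicIndex k y) : dist x y ≤ d * (2 ^ k)⁻¹ := by
  refine dist_le_mul_of_forall_abs_sub_le fun i => ?_
  have hlt := Int.abs_sub_lt_one_of_floor_eq_floor (congrFun h i)
  rw [← mul_sub, abs_mul, abs_of_pos (by positivity)] at hlt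
  exact (le_inv_mul_iff₀ (by positivity)).2 hlt.le |>.trans_eq (mul_one _)

lemma dist_le_of_mem_unitCube {x y : EuclideanSpace ℝ (Fin d)} (hx : x ∈ unitCube d)
    (hy : y ∈ unitCube d) : dist x y ≤ d := by
  simpa using dist_le_mul_of_forall_abs_sub_le fun i =>
    abs_sub_le_of_nonneg_of_le (hx i).1 (hx i).2 (hy i).1 (hy i).2

lemma dist_le_add_separationCost {x y : EuclideanSpace ℝ (Fin d)} (hx : x ∈ unitCube d)
    (hy : y ∈ unitCube d) (K : ℕ) :
    dist x y ≤ d * (2 ^ K)⁻¹ + separationCost dyadicIndex (fun k => d * (2 ^ k)⁻¹) (K + 1) x y := by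
  have hcost (K : ℕ) :
      0 ≤ separationCost (dyadicIndex (d := d)) (fun k => d * (2 ^ k)⁻¹) K x y :=
    Finset.sum_nonneg fun k _ => by positivity
  induction K with
  | zero => simpa using (dist_le_of_mem_unitCube hx hy).trans (le_add_of_nonneg_right (hcost 1))
  | succ K ih =>
    by_cases h : dyadicIndex (K + 1) x = dyadicIndex (K + 1) y
    · exact (dist_le_of_dyadicIndex_eq h).trans (le_add_of_nonneg_right (hcost _))
    · refine ih.trans_eq ?_
      conv_rhs => rw [separationCost, Finset.sum_range_succ, if_neg h, ← separationCost]
      ring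

lemma LMBM_le_multiscale (hd : 0 < d) {N : ℕ} {x y : Fin N → EuclideanSpace ℝ (Fin d)}
    (hx : ∀ i, x i ∈ unitCube d) (hy : ∀ i, y i ∈ unitCube d) (K : ℕ) :
    LMBM x y ≤ N * (d * (2 ^ K)⁻¹) + ∑ k ∈ Finset.range (K + 1), d * (2 ^ k)⁻¹ *
      ∑ q ∈ dyadicIndices d k, discrepancy (dyadicIndex k ⁻¹' {q}) x y := by
  obtain ⟨π, hπ⟩ := exists_perm_sum_separationCost_le (K := K + 1) antitone_ker_dyadicIndex
    (fun k => by positivity : ∀ k, (0 : ℝ) < d * (2 ^ k)⁻¹) y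
    (fun k i => dyadicIndex_mem_dyadicIndices k (hx i))
  calc LMBM x y
      ≤ ∑ i, dist (x i) (y (π i)) := LMBM_le_sum_dist_perm x y π
    _ ≤ ∑ i, (d * (2 ^ K)⁻¹ + separationCost dyadicIndex (fun k => d * (2 ^ k)⁻¹) (K + 1)
          (x i) (y (π i))) :=
        Finset.sum_le_sum fun i _ => dist_le_add_separationCost (hx i) (hy (π i)) K
    _ ≤ _ := by
        rw [Finset.sum_add_distrib]
        gcongr
        simp

end Dyadic

section Sampling

variable {Ω E α ι : Type*} [MeasurableSpace Ω] [MeasurableSpace E] {μ : Measure Ω}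

lemma integral_indicator_one_comp {T : Ω → E} (hT : AEMeasurable T μ) {A : Set E}
    (hA : MeasurableSet A) :
    ∫ ω, A.indicator (1 : E → ℝ) (T ω) ∂μ = (μ.map T).real A := by
  rw [← integral_indicator_one hA,
    integral_map hT (stronglyMeasurable_one.indicator hA).aestronglyMeasurable]

lemma memLp_indicator_one_comp [IsFiniteMeasure μ] {T : Ω → E} (hT : AEMeasurable T μ) {A : Set E}
    (hA : MeasurableSet A) (p : ENNReal) :
    MemLp (fun ω => A.indicator (1 : E → ℝ) (T ω)) p μ :=
  .of_bound ((measurable_one.indicator hA).comp_aemeasurable hT).aestronglyMeasurable 1 <|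
    .of_forall fun ω => (norm_indicator_le_norm_self _ _).trans_eq (by simp)

variable [Fintype α] {X Y : α → Ω → E} {ν : Measure E}

lemma integrable_discrepancy [IsFiniteMeasure μ] (hX : ∀ i, AEMeasurable (X i) μ)
    (hY : ∀ i, AEMeasurable (Y i) μ) {A : Set E} (hA : MeasurableSet A) :
    Integrable (fun ω => discrepancy A (fun i => X i ω) (fun i => Y i ω)) μ :=
  .abs <| integrable_finsetSum _ fun i _ =>
    ((memLp_indicator_one_comp (hX i) hA 1).integrable le_rfl).sub
      ((memLp_indicator_one_comp (hY i) hA 1).integrable le_rfl)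

variable [IsProbabilityMeasure μ]

lemma integral_abs_le_sqrt_integral_sq {f : Ω → ℝ} (hf : MemLp f 2 μ) :
    ∫ ω, |f ω| ∂μ ≤ √(∫ ω, f ω ^ 2 ∂μ) := by
  have hvar := variance_nonneg |f| μ
  rw [variance_eq_sub hf.abs] at hvar
  refine Real.le_sqrt_of_sq_le ?_
  simpa using hvar

lemma integral_abs_sum_le_sqrt [Fintype ι] {W : ι → Ω → ℝ} (hW : ∀ i, MemLp (W i) 2 μ)
    (hindep : Pairwise fun i j => IndepFun (W i) (W j) μ) (hmean : ∑ i, ∫ ω, W i ω ∂μ = 0) :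
    ∫ ω, |∑ i, W i ω| ∂μ ≤ √(∑ i, ∫ ω, W i ω ^ 2 ∂μ) := by
  have hsum : MemLp (∑ i, W i) 2 μ := memLp_finsetSum' _ fun i _ => hW i
  have hcentred : ∫ ω, (∑ i, W i) ω ∂μ = 0 := by
    simp_rw [Finset.sum_apply, ← hmean]
    exact integral_finsetSum _ fun i _ => (hW i).integrable one_le_two
  calc ∫ ω, |∑ i, W i ω| ∂μ
      ≤ √(∫ ω, (∑ i, W i) ω ^ 2 ∂μ) := by
        simpa using integral_abs_le_sqrt_integral_sq hsum
    _ = √(∑ i, Var[W i; μ]) := by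
        rw [← variance_of_integral_eq_zero hsum.aemeasurable hcentred,
          IndepFun.variance_sum (fun i _ => hW i) (fun i _ j _ hij => hindep hij)]
    _ ≤ √(∑ i, ∫ ω, W i ω ^ 2 ∂μ) := by
        gcongr with i
        simpa using variance_le_expectation_sq (hW i).aestronglyMeasurable

variable (hlaw : ∀ s, HasLaw (Sum.elim X Y s) ν μ)
  (hindep : Pairwise fun s t => IndepFun (Sum.elim X Y s) (Sum.elim X Y t) μ)

include hlaw hindep

lemma integral_discrepancy_le {A : Set E} (hA : MeasurableSet A) :
    ∫ ω, discrepancy A (fun i => X i ω) (fun i => Y i ω) ∂μ ≤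
      √(2 * Fintype.card α * ν.real A) := by
  let sign : α ⊕ α → ℝ := Sum.elim 1 (-1)
  let W (s : α ⊕ α) (ω : Ω) : ℝ := sign s * A.indicator 1 (Sum.elim X Y s ω)
  have hsign (s : α ⊕ α) : sign s ^ 2 = 1 := by cases s <;> simp [sign]
  have hmean (s : α ⊕ α) : ∫ ω, W s ω ∂μ = sign s * ν.real A := by
    rw [integral_const_mul, integral_indicator_one_comp (hlaw s).aemeasurable hA, (hlaw s).map_eq]
  have hsq (s : α ⊕ α) : ∫ ω, W s ω ^ 2 ∂μ = ν.real A := by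
    rw [← (hlaw s).map_eq, ← integral_indicator_one_comp (hlaw s).aemeasurable hA]
    congr 1 with ω
    rw [mul_pow, hsign, one_mul]
    by_cases hω : Sum.elim X Y s ω ∈ A <;> simp [hω]
  have hWindep : Pairwise fun s t => IndepFun (W s) (W t) μ := fun s t hst =>
    have hg (u : α ⊕ α) : Measurable fun z => sign u * A.indicator (1 : E → ℝ) z :=
      (measurable_one.indicator hA).const_mul _
    (hindep hst).comp (hg s) (hg t)
  have hW (s : α ⊕ α) : MemLp (W s) 2 μ :=
    (memLp_indicator_one_comp (hlaw s).aemeasurable hA 2).const_mul (sign s)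
  calc ∫ ω, discrepancy A (fun i => X i ω) (fun i => Y i ω) ∂μ
      = ∫ ω, |∑ s, W s ω| ∂μ := by
        simp [discrepancy, W, sign, sub_eq_add_neg, Finset.sum_add_distrib]
    _ ≤ √(∑ s, ∫ ω, W s ω ^ 2 ∂μ) :=
        integral_abs_sum_le_sqrt hW hWindep (by simp_rw [hmean]; simp [sign])
    _ = √(2 * Fintype.card α * ν.real A) := by
        simp only [hsq, Finset.sum_const, Finset.card_univ, Fintype.card_sum, nsmul_eq_mul,
          Nat.cast_add, two_mul]

lemma integral_sum_discrepancy_fiber_le {c : E → ι} (hc : ∀ q, MeasurableSet (c ⁻¹' {q}))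
    (S : Finset ι) :
    ∫ ω, ∑ q ∈ S, discrepancy (c ⁻¹' {q}) (fun i => X i ω) (fun i => Y i ω) ∂μ ≤
      √(2 * Fintype.card α * S.card) := by
  obtain hα | ⟨⟨i₀⟩⟩ := isEmpty_or_nonempty α
  · simp [discrepancy]
  have : IsProbabilityMeasure ν := (hlaw (.inl i₀)).isProbabilityMeasure_iff.1 ‹_›
  calc ∫ ω, ∑ q ∈ S, discrepancy (c ⁻¹' {q}) (fun i => X i ω) (fun i => Y i ω) ∂μ
      = ∑ q ∈ S, ∫ ω, discrepancy (c ⁻¹' {q}) (fun i => X i ω) (fun i => Y i ω) ∂μ :=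
        integral_finsetSum _ fun q _ => integrable_discrepancy
          (fun i => (hlaw (.inl i)).aemeasurable) (fun i => (hlaw (.inr i)).aemeasurable) (hc q)
    _ ≤ ∑ q ∈ S, √(2 * Fintype.card α * 1) * √(ν.real (c ⁻¹' {q})) := by
        gcongr with q
        rw [← Real.sqrt_mul (by positivity), mul_one]
        exact integral_discrepancy_le hlaw hindep (hc q)
    _ ≤ √(∑ q ∈ S, 2 * Fintype.card α * 1) * √(∑ q ∈ S, ν.real (c ⁻¹' {q})) :=
        Real.sum_sqrt_mul_sqrt_le S (fun _ => by positivity) (fun _ => measureReal_nonneg)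
    _ ≤ √(2 * Fintype.card α * S.card) * √1 := by
        rw [sum_measureReal_preimage_singleton S fun q _ => hc q]
        gcongr
        · simp [mul_comm]
        · exact measureReal_le_one
    _ = √(2 * Fintype.card α * S.card) := by simp

end Sampling

section Moments

variable {d N : ℕ} {Ω : Type*} [MeasurableSpace Ω] {μ : Measure Ω}
  {X Y : Fin N → Ω → EuclideanSpace ℝ (Fin d)} {ν : Measure (EuclideanSpace ℝ (Fin d))}

lemma measurableSet_unitCube (d : ℕ) : MeasurableSet (unitCube d) := by
  simp only [unitCube, Set.ofPred_forall]
  exact .iInter fun i => measurableSet_Icc.preimage (by fun_prop)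

lemma ae_mem_unitCube (hν : ∀ᵐ x ∂ν, x ∈ unitCube d)
    (hlaw : ∀ s, HasLaw (Sum.elim X Y s) ν μ) :
    ∀ᵐ ω ∂μ, (∀ i, X i ω ∈ unitCube d) ∧ ∀ i, Y i ω ∈ unitCube d := by
  have hmem := ae_all_iff.2 fun s =>
    ((hlaw s).ae_iff (measurableSet_unitCube d).mem).2 hν
  filter_upwards [hmem] with ω hω
  exact ⟨fun i => hω (.inl i), fun i => hω (.inr i)⟩

lemma integrable_LMBM [IsFiniteMeasure μ] (hν : ∀ᵐ x ∂ν, x ∈ unitCube d)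
    (hlaw : ∀ s, HasLaw (Sum.elim X Y s) ν μ) :
    Integrable (fun ω => LMBM (fun i => X i ω) (fun i => Y i ω)) μ := by
  refine .of_bound (aemeasurable_LMBM (fun i => (hlaw (.inl i)).aemeasurable)
    (fun i => (hlaw (.inr i)).aemeasurable)).aestronglyMeasurable (∑ _ : Fin N, (d : ℝ)) ?_
  filter_upwards [ae_mem_unitCube hν hlaw] with ω ⟨hX, hY⟩
  rw [Real.norm_of_nonneg (LMBM_nonneg _ _)]
  exact (LMBM_le_sum_dist_perm _ _ 1).trans <|
    Finset.sum_le_sum fun i _ => dist_le_of_mem_unitCube (hX i) (hY i)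

lemma integral_LMBM_le_multiscale [IsProbabilityMeasure μ] (hd : 0 < d)
    (hν : ∀ᵐ x ∂ν, x ∈ unitCube d)
    (hlaw : ∀ s, HasLaw (Sum.elim X Y s) ν μ)
    (hindep : Pairwise fun s t => IndepFun (Sum.elim X Y s) (Sum.elim X Y t) μ) (K : ℕ) :
    ∫ ω, LMBM (fun i => X i ω) (fun i => Y i ω) ∂μ ≤
      N * (d * (2 ^ K)⁻¹) +
        ∑ k ∈ Finset.range (K + 1), d * (2 ^ k)⁻¹ * √(2 * N * (2 ^ k + 1) ^ d) := by
  let D (k : ℕ) (ω : Ω) : ℝ := ∑ q ∈ dyadicIndices d k,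
    discrepancy (dyadicIndex k ⁻¹' {q}) (fun i => X i ω) (fun i => Y i ω)
  have hcell (k : ℕ) (q : Fin d → ℤ) :
      MeasurableSet (dyadicIndex k ⁻¹' {q} : Set (EuclideanSpace ℝ (Fin d))) :=
    measurable_dyadicIndex k (measurableSet_singleton q)
  have hD (k : ℕ) : Integrable (D k) μ := integrable_finsetSum _ fun q _ =>
    integrable_discrepancy (fun i => (hlaw (.inl i)).aemeasurable)
      (fun i => (hlaw (.inr i)).aemeasurable) (hcell k q)
  have hsum : Integrable
      (fun ω => ∑ k ∈ Finset.range (K + 1), d * (2 ^ k)⁻¹ * D k ω) μ :=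
    integrable_finsetSum _ fun k _ => (hD k).const_mul _
  calc ∫ ω, LMBM (fun i => X i ω) (fun i => Y i ω) ∂μ
      ≤ ∫ ω, (N * (d * (2 ^ K)⁻¹) + ∑ k ∈ Finset.range (K + 1), d * (2 ^ k)⁻¹ * D k ω) ∂μ := by
        refine integral_mono_ae (integrable_LMBM hν hlaw) ((integrable_const _).add hsum) ?_
        filter_upwards [ae_mem_unitCube hν hlaw] with ω ⟨hX, hY⟩
        exact LMBM_le_multiscale hd hX hY K
    _ = N * (d * (2 ^ K)⁻¹) + ∑ k ∈ Finset.range (K + 1), d * (2 ^ k)⁻¹ * ∫ ω, D k ω ∂μ := by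
        rw [integral_add (integrable_const _) hsum,
          integral_finsetSum _ fun k _ => (hD k).const_mul _]
        simp [integral_const_mul]
    _ ≤ _ := by
        gcongr with k
        simpa [card_dyadicIndices] using
          integral_sum_discrepancy_fiber_le hlaw hindep (hcell k) (dyadicIndices d k)

end Moments

section UpperBound

variable {d : ℕ}

lemma sum_range_succ_pow_le {ρ : ℝ} (hρ : 1 < ρ) (K : ℕ) :
    ∑ k ∈ Finset.range (K + 1), ρ ^ k ≤ ρ / (ρ - 1) * ρ ^ K := by
  rw [geom_sum_eq hρ.ne', div_mul_eq_mul_div, ← pow_succ']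
  exact div_le_div_of_nonneg_right (sub_le_self _ zero_le_one) (sub_nonneg.2 hρ.le)

lemma exists_dyadic_scale (hd : d ≠ 0) {N : ℕ} (hN : N ≠ 0) :
    ∃ K : ℕ, ((2 : ℝ) ^ K) ^ d ≤ N ∧ N * ((2 : ℝ) ^ K)⁻¹ ≤ 2 * (N : ℝ) ^ (1 - 1 / (d : ℝ)) := by
  have hN₀ : (0 : ℝ) < N := by positivity
  let K := Nat.log (2 ^ d) N
  have hlower : ((2 : ℝ) ^ K) ^ d ≤ N := by
    rw [pow_right_comm]
    exact_mod_cast Nat.pow_log_le_self (2 ^ d) hN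
  have hupper : (N : ℝ) ≤ (2 ^ (K + 1)) ^ d := by
    rw [pow_right_comm]
    exact_mod_cast (Nat.lt_pow_succ_log_self (Nat.one_lt_two_pow hd) N).le
  refine ⟨K, hlower, ?_⟩
  have hroot : (N : ℝ) ^ (1 / (d : ℝ)) ≤ 2 * 2 ^ K := by
    rw [← pow_succ', one_div]
    refine (Real.rpow_inv_le_iff_of_pos (by positivity) (by positivity) (by positivity)).2 ?_
    rwa [Real.rpow_natCast]
  rw [Real.rpow_sub hN₀, Real.rpow_one, ← div_eq_mul_inv, mul_div_assoc',
    div_le_div_iff₀ (by positivity) (by positivity)]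
  linarith [mul_le_mul_of_nonneg_left hroot hN₀.le]

lemma sqrt_pow_pow {a : ℝ} (ha : 0 ≤ a) (k d : ℕ) : √((a ^ k) ^ d) = √(a ^ d) ^ k := by
  rw [pow_right_comm, Real.sqrt_eq_iff_mul_self_eq (by positivity) (by positivity), ← mul_pow,
    Real.mul_self_sqrt (by positivity)]

lemma inv_two_pow_mul_sqrt_le (d k N : ℕ) :
    ((2 : ℝ) ^ k)⁻¹ * √(2 * N * (2 ^ k + 1) ^ d) ≤ √(2 ^ (d + 1)) * √N * (√(2 ^ d) / 2) ^ k := by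
  have hcard : (2 * N * (2 ^ k + 1) ^ d : ℝ) ≤ 2 ^ (d + 1) * N * (2 ^ k) ^ d := by
    calc (2 * N * (2 ^ k + 1) ^ d : ℝ) ≤ 2 * N * (2 * 2 ^ k) ^ d := by
          gcongr
          linarith [one_le_pow₀ one_le_two (M₀ := ℝ) (n := k)]
      _ = 2 ^ (d + 1) * N * (2 ^ k) ^ d := by ring
  calc ((2 : ℝ) ^ k)⁻¹ * √(2 * N * (2 ^ k + 1) ^ d)
      ≤ (2 ^ k)⁻¹ * √(2 ^ (d + 1) * N * (2 ^ k) ^ d) := by gcongr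
    _ = √(2 ^ (d + 1)) * √N * (√(2 ^ d) / 2) ^ k := by
        rw [Real.sqrt_mul (by positivity), Real.sqrt_mul (by positivity), sqrt_pow_pow zero_le_two,
          div_pow]
        ring

lemma exists_scale_sum_le (hd : 3 ≤ d) : ∃ C : ℝ, ∀ N : ℕ, N ≠ 0 → ∃ K : ℕ,
    N * (d * ((2 : ℝ) ^ K)⁻¹) +
        ∑ k ∈ Finset.range (K + 1), d * ((2 : ℝ) ^ k)⁻¹ * √(2 * N * (2 ^ k + 1) ^ d) ≤
      C * (N : ℝ) ^ (1 - 1 / (d : ℝ)) := by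
  set ρ : ℝ := √(2 ^ d) / 2
  -- Since `d ≥ 3`, the sum is dominated by its finest scale.
  have hρ : 1 < ρ := by
    rw [lt_div_iff₀ two_pos, one_mul]
    refine Real.lt_sqrt_of_sq_lt ?_
    calc (2 : ℝ) ^ 2 < 2 ^ 3 := by norm_num
      _ ≤ 2 ^ d := pow_le_pow_right₀ one_le_two hd
  have : 0 < ρ - 1 := sub_pos.2 hρ
  set A : ℝ := d * √(2 ^ (d + 1)) * (ρ / (ρ - 1))
  refine ⟨(d + A) * 2, fun N hN => ?_⟩
  obtain ⟨K, hlower, hupper⟩ := exists_dyadic_scale (by lia : d ≠ 0) hN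
  refine ⟨K, ?_⟩
  have hρK : ρ ^ K ≤ √N * (2 ^ K)⁻¹ := by
    rw [div_pow, ← sqrt_pow_pow zero_le_two, div_eq_mul_inv]
    gcongr
  have hsum : ∑ k ∈ Finset.range (K + 1), d * ((2 : ℝ) ^ k)⁻¹ * √(2 * N * (2 ^ k + 1) ^ d) ≤
      A * (N * (2 ^ K)⁻¹) :=
    calc _ ≤ ∑ k ∈ Finset.range (K + 1), d * (√(2 ^ (d + 1)) * √N) * ρ ^ k := by
          simp_rw [mul_assoc (d : ℝ)]
          exact Finset.sum_le_sum fun k _ =>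
            mul_le_mul_of_nonneg_left (inv_two_pow_mul_sqrt_le d k N) d.cast_nonneg
      _ ≤ d * (√(2 ^ (d + 1)) * √N) * (ρ / (ρ - 1) * ρ ^ K) := by
          rw [← Finset.mul_sum]
          gcongr
          exact sum_range_succ_pow_le hρ K
      _ ≤ d * (√(2 ^ (d + 1)) * √N) * (ρ / (ρ - 1) * (√N * (2 ^ K)⁻¹)) := by gcongr
      _ = A * (√N * √N * (2 ^ K)⁻¹) := by ring
      _ = A * (N * (2 ^ K)⁻¹) := by rw [Real.mul_self_sqrt N.cast_nonneg]
  calc _ ≤ (N : ℝ) * (d * (2 ^ K)⁻¹) + A * (N * (2 ^ K)⁻¹) := by gcongr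
    _ = (d + A) * (N * (2 ^ K)⁻¹) := by ring
    _ ≤ (d + A) * (2 * (N : ℝ) ^ (1 - 1 / (d : ℝ))) := by gcongr
    _ = (d + A) * 2 * (N : ℝ) ^ (1 - 1 / (d : ℝ)) := by ring

end UpperBound

section LowerBound

/-- The number of pairs `(i, j)` for which `x i` and `y j` are at distance less than `r`, as a sum
of indicators so that its expectation can be computed termwise. -/
noncomputable def closePairCount {α E : Type*} [Fintype α] [Dist E] (r : ℝ) (x y : α → E) : ℝ :=
  ∑ i, ∑ j, {p : E × E | dist p.1 p.2 < r}.indicator (1 : E × E → ℝ) (x i, y j)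

lemma mul_sub_closePairCount_le_LMBM {d N : ℕ} (x y : Fin N → EuclideanSpace ℝ (Fin d)) {r : ℝ}
    (hr : 0 ≤ r) : r * (N - closePairCount r x y) ≤ LMBM x y := by
  refine le_LMBM fun π => ?_
  rw [closePairCount, (by simp : (N : ℝ) = ∑ _ : Fin N, 1), ← Finset.sum_sub_distrib,
    Finset.mul_sum]
  refine Finset.sum_le_sum fun i _ => ?_
  set close := {p : EuclideanSpace ℝ (Fin d) × _ | dist p.1 p.2 < r}
  calc r * (1 - ∑ j, close.indicator 1 (x i, y j))
      ≤ r * (1 - close.indicator 1 (x i, y (π i))) := by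
        gcongr
        exact Finset.single_le_sum (f := fun j => close.indicator (1 : _ × _ → ℝ) (x i, y j))
          (fun j _ => Set.indicator_nonneg (fun _ _ => zero_le_one) _) (Finset.mem_univ _)
    _ ≤ dist (x i) (y (π i)) := by
        by_cases h : dist (x i) (y (π i)) < r
        · simp [close, h]
        · simpa [close, h] using not_lt.1 h

section CloseProbability

variable {Ω α E : Type*} [MeasurableSpace Ω] {μ : Measure Ω} [IsProbabilityMeasure μ]
  [PseudoMetricSpace E] [SecondCountableTopology E] [MeasurableSpace E] [OpensMeasurableSpace E]
  {ν : Measure E} {r : ℝ}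

lemma map_prodMk_dist_lt_le {U V : Ω → E} (hU : AEMeasurable U μ) (hV : HasLaw V ν μ)
    (hindep : IndepFun U V μ) {p : ENNReal} (hball : ∀ x, ν (Metric.ball x r) ≤ p) :
    μ.map (fun ω => (U ω, V ω)) {q : E × E | dist q.1 q.2 < r} ≤ p := by
  have : IsProbabilityMeasure (μ.map U) := Measure.isProbabilityMeasure_map hU
  have : IsProbabilityMeasure ν := hV.isProbabilityMeasure_iff.1 ‹_›
  rw [(indepFun_iff_map_prod_eq_prod_map_map hU hV.aemeasurable).1 hindep, hV.map_eq,
    Measure.prod_apply (measurableSet_lt measurable_dist measurable_const)]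
  calc ∫⁻ x, ν (Prod.mk x ⁻¹' {q | dist q.1 q.2 < r}) ∂μ.map U ≤ ∫⁻ _, p ∂μ.map U :=
        lintegral_mono fun x =>
          (measure_mono fun y (hy : dist x y < r) => Metric.mem_ball'.2 hy).trans (hball x)
    _ = p := by simp

lemma integrable_indicator_dist_lt {U V : Ω → E} (hU : AEMeasurable U μ)
    (hV : AEMeasurable V μ) :
    Integrable (fun ω => {p : E × E | dist p.1 p.2 < r}.indicator (1 : E × E → ℝ) (U ω, V ω)) μ :=
  (memLp_indicator_one_comp (hU.prodMk hV)
    (measurableSet_lt measurable_dist measurable_const) 1).integrable le_rfl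

variable [Fintype α] {X Y : α → Ω → E}

lemma integrable_closePairCount (hX : ∀ i, AEMeasurable (X i) μ) (hY : ∀ j, AEMeasurable (Y j) μ) :
    Integrable (fun ω => closePairCount r (fun i => X i ω) (fun j => Y j ω)) μ :=
  integrable_finsetSum _ fun i _ => integrable_finsetSum _ fun j _ =>
    integrable_indicator_dist_lt (hX i) (hY j)

lemma integral_closePairCount_le (hX : ∀ i, AEMeasurable (X i) μ) (hY : ∀ j, HasLaw (Y j) ν μ)
    (hindep : ∀ i j, IndepFun (X i) (Y j) μ) {p : ℝ} (hp : 0 ≤ p)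
    (hball : ∀ x, ν (Metric.ball x r) ≤ ENNReal.ofReal p) :
    ∫ ω, closePairCount r (fun i => X i ω) (fun j => Y j ω) ∂μ ≤ Fintype.card α ^ 2 * p := by
  have hint (i j) := integrable_indicator_dist_lt (r := r) (hX i) (hY j).aemeasurable
  simp only [closePairCount]
  rw [integral_finsetSum _ fun i _ => integrable_finsetSum _ fun j _ => hint i j]
  calc ∑ i, ∫ ω, ∑ j, {p : E × E | dist p.1 p.2 < r}.indicator (1 : E × E → ℝ) (X i ω, Y j ω) ∂μ
      ≤ ∑ _ : α, ∑ _ : α, p := by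
        refine Finset.sum_le_sum fun i _ => ?_
        rw [integral_finsetSum _ fun j _ => hint i j]
        refine Finset.sum_le_sum fun j _ => ?_
        rw [integral_indicator_one_comp ((hX i).prodMk (hY j).aemeasurable)
          (measurableSet_lt measurable_dist measurable_const)]
        exact ENNReal.toReal_le_of_le_ofReal hp
          (map_prodMk_dist_lt_le (hX i) (hY j) (hindep i j) hball)
    _ = Fintype.card α ^ 2 * p := by simp [sq, mul_assoc]

end CloseProbability

lemma le_integral_LMBM_of_measure_ball_le {d N : ℕ} {Ω : Type*} [MeasurableSpace Ω] {μ : Measure Ω}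
    [IsProbabilityMeasure μ] {X Y : Fin N → Ω → EuclideanSpace ℝ (Fin d)}
    {ν : Measure (EuclideanSpace ℝ (Fin d))} (hN : N ≠ 0) (hX : ∀ i, AEMeasurable (X i) μ)
    (hY : ∀ j, HasLaw (Y j) ν μ) (hindep : ∀ i j, IndepFun (X i) (Y j) μ)
    (hint : Integrable (fun ω => LMBM (fun i => X i ω) (fun j => Y j ω)) μ) {κ s : ℝ}
    (hκ : 0 < κ) (hs : s ≠ 0)
    (hball : ∀ x r, 0 < r → ν (Metric.ball x r) ≤ ENNReal.ofReal (κ * r ^ s)) :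
    (2 * κ) ^ (-(1 / s)) / 2 * (N : ℝ) ^ (1 - 1 / s) ≤
      ∫ ω, LMBM (fun i => X i ω) (fun j => Y j ω) ∂μ := by
  have hN₀ : (0 : ℝ) < N := by positivity
  -- At this radius the expected number of close pairs is at most `N / 2`.
  set r : ℝ := (2 * κ * N) ^ (-(1 / s)) with hr_def
  have hr : 0 < r := by positivity
  have hmass : κ * r ^ s = (2 * N : ℝ)⁻¹ := by
    rw [← Real.rpow_mul (by positivity), neg_mul, one_div_mul_cancel hs, Real.rpow_neg_one]
    field_simp
  have hcount := integrable_closePairCount (r := r) hX fun j => (hY j).aemeasurable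
  calc (2 * κ) ^ (-(1 / s)) / 2 * (N : ℝ) ^ (1 - 1 / s)
      = r * (N - Fintype.card (Fin N) ^ 2 * (κ * r ^ s)) := by
        rw [hmass, hr_def, Real.mul_rpow (by positivity) hN₀.le, sub_eq_add_neg 1,
          Real.rpow_add hN₀, Real.rpow_one, Fintype.card_fin]
        field_simp
        ring
    _ ≤ r * (N - ∫ ω, closePairCount r (fun i => X i ω) (fun j => Y j ω) ∂μ) := by
        gcongr
        exact integral_closePairCount_le hX hY hindep (by positivity) fun x => hball x r hr
    _ = ∫ ω, r * (N - closePairCount r (fun i => X i ω) (fun j => Y j ω)) ∂μ := by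
        rw [integral_const_mul, integral_sub (integrable_const _) hcount]
        simp
    _ ≤ ∫ ω, LMBM (fun i => X i ω) (fun j => Y j ω) ∂μ :=
        integral_mono (((integrable_const _).sub hcount).const_mul r) hint
          fun ω => mul_sub_closePairCount_le_LMBM _ _ hr.le

end LowerBound

section Asymptotics

variable {d : ℕ}

lemma lt_liminf_of_eventually_mem_Icc {f : ℕ → ℝ} {a b c : ℝ} (hab : a < b)
    (hf : ∀ᶠ n in atTop, f n ∈ Set.Icc b c) : a < liminf f atTop :=
  hab.trans_le <| le_liminf_of_le
    (isBoundedUnder_of_eventually_le (hf.mono fun _ h => h.2)).isCoboundedUnder_ge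
    (hf.mono fun _ h => h.1)

lemma unifCube_ball_le (x : EuclideanSpace ℝ (Fin d)) {r : ℝ} (hr : 0 < r) :
    unifCube d (Metric.ball x r) ≤
      ENNReal.ofReal (volume.real (Metric.ball (0 : EuclideanSpace ℝ (Fin d)) 1) * r ^ d) := by
  rw [mul_comm, ENNReal.ofReal_mul (by positivity), ofReal_measureReal]
  exact (Measure.restrict_apply_le _ _).trans_eq (by simp [Measure.addHaar_ball_of_pos _ _ hr])

section Subfamily

variable {Ω E α β : Type*} [MeasurableSpace Ω] [MeasurableSpace E] {μ : Measure Ω}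
  {X Y : β → Ω → E}

lemma hasLaw_sumElim_comp {ν : Measure E} (hlaw : ∀ s, HasLaw (Sum.elim X Y s) ν μ) (f : α → β)
    (s : α ⊕ α) : HasLaw (Sum.elim (X ∘ f) (Y ∘ f) s) ν μ := by
  rw [← Sum.elim_comp_map]
  exact hlaw (s.map f f)

lemma pairwise_indepFun_sumElim_comp
    (hindep : Pairwise fun s t => IndepFun (Sum.elim X Y s) (Sum.elim X Y t) μ) {f : α → β}
    (hf : f.Injective) :
    Pairwise fun s t => IndepFun (Sum.elim (X ∘ f) (Y ∘ f) s) (Sum.elim (X ∘ f) (Y ∘ f) t) μ := by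
  simp only [← Sum.elim_comp_map]
  exact hindep.comp_of_injective (Sum.map_injective.2 ⟨hf, hf⟩)

end Subfamily

theorem liminf_EL_pos_general {Ω : Type*} [MeasurableSpace Ω] {μ : Measure Ω}
    [IsProbabilityMeasure μ] (hd : 3 ≤ d) {X Y : ℕ → Ω → EuclideanSpace ℝ (Fin d)}
    {ν : Measure (EuclideanSpace ℝ (Fin d))} (hν : ∀ᵐ x ∂ν, x ∈ unitCube d) {κ : ℝ} (hκ : 0 < κ)
    (hball : ∀ x r, 0 < r → ν (Metric.ball x r) ≤ ENNReal.ofReal (κ * r ^ d))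
    (hlaw : ∀ n, HasLaw (Sum.elim X Y n) ν μ)
    (hindep : Pairwise fun m n => IndepFun (Sum.elim X Y m) (Sum.elim X Y n) μ) :
    0 < liminf
      (fun N : ℕ =>
        (∫ ω, LMBM (fun i : Fin N => X i ω) (fun j : Fin N => Y j ω) ∂μ) /
          (N : ℝ) ^ (1 - 1 / (d : ℝ)))
      atTop := by
  obtain ⟨C, hC⟩ := exists_scale_sum_le hd
  refine lt_liminf_of_eventually_mem_Icc (b := (2 * κ) ^ (-(1 / (d : ℝ))) / 2) (c := C)
    (by positivity) ?_
  filter_upwards [eventually_ne_atTop 0] with N hN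
  have hlawN := hasLaw_sumElim_comp hlaw (Fin.val : Fin N → ℕ)
  have hindepN := pairwise_indepFun_sumElim_comp hindep (Fin.val_injective (n := N))
  obtain ⟨K, hK⟩ := hC N hN
  have hpow : 0 < (N : ℝ) ^ (1 - 1 / (d : ℝ)) := by positivity
  constructor
  · rw [le_div_iff₀ hpow]
    exact le_integral_LMBM_of_measure_ball_le hN (fun i => (hlaw (.inl i)).aemeasurable)
      (fun j => hlaw (.inr j)) (fun i j => hindep Sum.inl_ne_inr) (integrable_LMBM hν hlawN) hκ
      (by positivity) (by simpa only [Real.rpow_natCast] using hball)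
  · rw [div_le_iff₀ hpow]
    exact (integral_LMBM_le_multiscale (by lia) hν hlawN hindepN K).trans hK

end Asymptotics

/-- For `d ≥ 3`, the normalized expected minimum bipartite matching length of `2N`
i.i.d. uniform points of `[0,1]^d` has a strictly positive liminf: the limit constant
`β_MBM(d)` is strictly positive. -/
theorem liminf_EL_pos
    (d : ℕ) (hd : 3 ≤ d)
    (Ω : Type*) [MeasureSpace Ω] [IsProbabilityMeasure (ℙ : Measure Ω)]
    (X Y : ℕ → Ω → EuclideanSpace ℝ (Fin d))
    (hmeas : ∀ n, Measurable (Sum.elim X Y n))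
    (hindep : iIndepFun (Sum.elim X Y) ℙ)
    (hunif : ∀ n, Measure.map (Sum.elim X Y n) ℙ = unifCube d) :
    0 < Filter.liminf
        (fun N : ℕ =>
          (∫ ω, LMBM (fun i : Fin N => X i ω) (fun j : Fin N => Y j ω) ∂ℙ) /
            (N : ℝ) ^ (1 - 1 / (d : ℝ)))
        atTop := by
  exact liminf_EL_pos_general hd (ae_restrict_mem (measurableSet_unitCube d))
    (ENNReal.toReal_pos (Metric.measure_ball_pos _ _ one_pos).ne' measure_ball_lt_top.ne)
    (fun x _ hr => unifCube_ball_le x hr) (fun n => ⟨(hmeas n).aemeasurable, hunif n⟩)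
    fun _ _ hmn => hindep.indepFun hmn
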